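/- For every x ∈ X̂ one has d̂(x,∞) = d_a(x,∞) and d̂(x,a) = d_a(x,a); in particular, d̂(x,∞) = 1/(1+|x|) for every x ∈ X. -/

import Mathlib

open Metric Set MeasureTheory Filter
open scoped ENNReal NNReal

noncomputable section

variable {X : Type*}

/-- The quasimetric `d_a` on the sphericalization `X̂ = X ∪ {∞}`, with `none` playing
the role of the point `∞`. -/
noncomputable def sphDist [MetricSpace X] (a : X) : Option X → Option X → ℝ
  | some x, some y => dist x y / ((1 + dist x a) * (1 + dist y a))
  | some x, none => 1 / (1 + dist x a)
  | none, some y => 1 / (1 + dist y a)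
  | none, none => 0

/-- The sum `Σ_{j=1}^k d_a(x_{j-1}, x_j)` along a finite sequence (list) in `X̂`. -/
noncomputable def chainSum [MetricSpace X] (a : X) : List (Option X) → ℝ
  | [] => 0
  | [_] => 0
  | x :: y :: l => sphDist a x y + chainSum a (y :: l)

/-- The sphericalized distance `d̂(x,y) = inf Σ_{j=1}^k d_a(x_{j-1},x_j)`, the infimum
being taken over all finite sequences `x = x_0, x_1, …, x_k = y` in `X̂`. -/
noncomputable def sphHatDist [MetricSpace X] (a : X) (x y : Option X) : ℝ :=
  sInf {s : ℝ | ∃ L : List (Option X),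
    L.head? = some x ∧ L.getLast? = some y ∧ chainSum a L = s}

/-- `d̂(x) = d̂(x,∞) = 1/(1+|x|)` for `x ∈ X`. -/
noncomputable def sphD [MetricSpace X] (a x : X) : ℝ := 1 / (1 + dist x a)

/-!
The function `u = d_a(·, ∞)` is 1-Lipschitz with respect to `d_a`, so every chain from `x` to `y`
has length at least `|u x - u y|`. This lower bound equals `d_a(x, y)` when `y = ∞`, because
`u ∞ = 0`, and when `y = a`, because `d_a(x, a) = 1 - u x = u a - u x`; in both cases the one-step
chain is therefore optimal.
-/

section Sphericalization

variable [MetricSpace X] {a : X}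

theorem abs_sub_le_chainSum {f : Option X → ℝ} (hf : ∀ x y, |f x - f y| ≤ sphDist a x y) :
    ∀ (L : List (Option X)) {x y : Option X}, L.head? = some x → L.getLast? = some y →
      |f x - f y| ≤ chainSum a L
  | [], _, _, hx, _ => by simp at hx
  | [z], x, y, hx, hy => by
    obtain rfl : z = x := by simpa using hx
    obtain rfl : z = y := by simpa using hy
    simp [chainSum]
  | z :: w :: L, x, y, hx, hy => by
    obtain rfl : z = x := by simpa using hx
    rw [List.getLast?_cons_cons] at hy
    calc |f z - f y| ≤ |f z - f w| + |f w - f y| := abs_sub_le _ _ _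
      _ ≤ sphDist a z w + chainSum a (w :: L) :=
        add_le_add (hf z w) (abs_sub_le_chainSum hf (w :: L) rfl hy)

theorem sphHatDist_eq_sphDist_of_abs_sub_eq {f : Option X → ℝ}
    (hf : ∀ x y, |f x - f y| ≤ sphDist a x y) {x y : Option X}
    (hxy : |f x - f y| = sphDist a x y) : sphHatDist a x y = sphDist a x y := by
  refine IsLeast.csInf_eq ⟨⟨[x, y], rfl, rfl, by simp [chainSum]⟩, ?_⟩
  rintro _ ⟨L, hx, hy, rfl⟩
  exact hxy ▸ abs_sub_le_chainSum hf L hx hy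

variable (a)

theorem sphDist_nonneg (x y : Option X) : 0 ≤ sphDist a x y := by
  cases x <;> cases y <;> simp only [sphDist] <;> positivity

theorem sphDist_comm (x y : Option X) : sphDist a x y = sphDist a y x := by
  cases x <;> cases y <;> simp [sphDist, dist_comm, mul_comm]

theorem abs_sphDist_none_right_sub_none (x : Option X) :
    |sphDist a x none - sphDist a none none| = sphDist a x none := by
  rw [show sphDist a none none = 0 from rfl, sub_zero, abs_of_nonneg (sphDist_nonneg a x none)]

theorem abs_sphDist_none_right_sub_le (x y : Option X) :
    |sphDist a x none - sphDist a y none| ≤ sphDist a x y := by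
  match x, y with
  | x, none => exact (abs_sphDist_none_right_sub_none a x).le
  | none, some y =>
    rw [abs_sub_comm, sphDist_comm a none]
    exact (abs_sphDist_none_right_sub_none a (some y)).le
  | some x, some y =>
    have hx : 0 < 1 + dist x a := by positivity
    have hy : 0 < 1 + dist y a := by positivity
    calc |1 / (1 + dist x a) - 1 / (1 + dist y a)|
        = |dist y a - dist x a| / ((1 + dist x a) * (1 + dist y a)) := by
          rw [div_sub_div _ _ hx.ne' hy.ne', abs_div, abs_of_pos (mul_pos hx hy)]
          congr 2
          ring
      _ ≤ dist x y / ((1 + dist x a) * (1 + dist y a)) := by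
          gcongr
          exact dist_comm y x ▸ abs_dist_sub_le y x a

theorem sphDist_base_right (x : Option X) : sphDist a x (some a) = 1 - sphDist a x none := by
  cases x with
  | none => simp [sphDist]
  | some x =>
    have hx : 1 + dist x a ≠ 0 := by positivity
    simp only [sphDist, dist_self]
    field_simp
    ring

theorem abs_sphDist_none_right_sub_base (x : Option X) :
    |sphDist a x none - sphDist a (some a) none| = sphDist a x (some a) := by
  have hbase : sphDist a (some a) none = 1 := by simp [sphDist]
  rw [hbase, abs_sub_comm, ← sphDist_base_right, abs_of_nonneg (sphDist_nonneg a x (some a))]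

theorem sphHatDist_none_right (x : Option X) : sphHatDist a x none = sphDist a x none :=
  sphHatDist_eq_sphDist_of_abs_sub_eq (abs_sphDist_none_right_sub_le a)
    (abs_sphDist_none_right_sub_none a x)

theorem sphHatDist_base_right (x : Option X) : sphHatDist a x (some a) = sphDist a x (some a) :=
  sphHatDist_eq_sphDist_of_abs_sub_eq (abs_sphDist_none_right_sub_le a)
    (abs_sphDist_none_right_sub_base a x)

end Sphericalization

theorem statement2_general [MetricSpace X] (a : X) :
    (∀ x : Option X, sphHatDist a x none = sphDist a x none) ∧
    (∀ x : Option X, sphHatDist a x (some a) = sphDist a x (some a)) ∧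
    (∀ x : X, sphHatDist a (some x) none = 1 / (1 + dist x a)) :=
  ⟨sphHatDist_none_right a, sphHatDist_base_right a, fun x => sphHatDist_none_right a (some x)⟩

/-- For every `x ∈ X̂` one has `d̂(x,∞) = d_a(x,∞)` and
`d̂(x,a) = d_a(x,a)`; in particular `d̂(x,∞) = 1/(1+|x|)` for every `x ∈ X`. -/
theorem statement2 [MetricSpace X]
    (hX : ¬ Bornology.IsBounded (Set.univ : Set X)) (a : X) :
    (∀ x : Option X, sphHatDist a x none = sphDist a x none) ∧
    (∀ x : Option X, sphHatDist a x (some a) = sphDist a x (some a)) ∧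
    (∀ x : X, sphHatDist a (some x) none = 1 / (1 + dist x a)) :=
  statement2_general a
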